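/- arXiv:2502.20565 — 2 statements merged into one kernel-verified Lean document; each statement's English description precedes it below -/
import Mathlib

section
/- Let f : ℝ^d → ℝ and λ > 0, and let u be uniformly distributed on the sphere of radius √d in ℝ^d. Define the two-point zeroth-order gradient estimator g(x) = ((f(x + λu) − f(x − λu))/(2λ))·u and the smoothed function f_λ(x) = E_v[f(x + λv)] where v is uniform on the Euclidean ball of radius √d. Then f_λ is differentiable and E_u[g(x)] = ∇f_λ(x). -/
open MeasureTheory
open scoped RealInnerProductSpace

/-- The uniform probability measure on the Euclidean ball of radius `√d` in `ℝ^d`. -/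
noncomputable def ballUniform (d : ℕ) : Measure (EuclideanSpace ℝ (Fin d)) :=
  (volume (Metric.closedBall (0 : EuclideanSpace ℝ (Fin d)) (Real.sqrt d)))⁻¹ •
    volume.restrict (Metric.closedBall (0 : EuclideanSpace ℝ (Fin d)) (Real.sqrt d))

/-!
Seen from the origin, a ball `B(w, R)` containing it is exited in the unit direction `u` at distance
`ρ(w, u) = ⟪u, w⟫ + √(R² - ‖w‖² + ⟪u, w⟫²)`. In polar coordinates the integral of a continuous `h`
over `B(w, R)` is thus `∫ u, ∫ r in 0..ρ(w, u), r ^ (n - 1) * h (r u)`, and since the derivative of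
`ρ(·, u)` at `0` is `⟪u, ·⟫`, its gradient at `w = 0` is `R ^ (n - 1) • ∫ u, h (R u) • u`.

An isometry invariant measure has a radial characteristic function. Integrating the characteristic
function of one such measure on a sphere against another one, and swapping the two, shows that they
are proportional; hence the surface measure above may be replaced by any of them. Invariance under
`u ↦ -u` finally turns the one-point integrand into the two-point one.
-/

section ExitRadius

variable {E : Type*} [NormedAddCommGroup E] [InnerProductSpace ℝ E] {R r : ℝ} {u w : E}

/-- The distance from the origin, in the direction of a unit vector `u`, to the sphere of centre `w`
and radius `R`. It is the larger root `r` of `‖r • u - w‖ ^ 2 = R ^ 2`, so it has this meaning for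
`‖w‖ ≤ R` only, i.e. when the origin lies in the ball. -/
noncomputable def exitRadius (R : ℝ) (w u : E) : ℝ :=
  ⟪u, w⟫ + √(R ^ 2 - ‖w‖ ^ 2 + ⟪u, w⟫ ^ 2)

@[fun_prop]
theorem continuous_exitRadius (R : ℝ) (w : E) : Continuous (exitRadius R w) := by
  unfold exitRadius
  fun_prop

theorem exitRadius_zero (hR : 0 ≤ R) (u : E) : exitRadius R 0 u = R := by
  simp [exitRadius, Real.sqrt_sq hR]

theorem norm_smul_sub_sq (hu : ‖u‖ = 1) (r : ℝ) (w : E) :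
    ‖r • u - w‖ ^ 2 = (r - ⟪u, w⟫) ^ 2 + (‖w‖ ^ 2 - ⟪u, w⟫ ^ 2) := by
  rw [norm_sub_sq_real, norm_smul, hu, mul_one, Real.norm_eq_abs, sq_abs, real_inner_smul_left]
  ring

theorem abs_inner_le_exitRadius_sub_inner (hw : ‖w‖ ≤ R) (u : E) :
    |⟪u, w⟫| ≤ exitRadius R w u - ⟪u, w⟫ := by
  rw [exitRadius, add_sub_cancel_left]
  refine Real.abs_le_sqrt (le_add_of_nonneg_left (sub_nonneg.2 ?_))
  gcongr

theorem exitRadius_nonneg (hw : ‖w‖ ≤ R) (u : E) : 0 ≤ exitRadius R w u := by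
  linarith [abs_inner_le_exitRadius_sub_inner hw u, neg_abs_le ⟪u, w⟫]

theorem norm_exitRadius_smul_sub (hu : ‖u‖ = 1) (hw : ‖w‖ ≤ R) :
    ‖exitRadius R w u • u - w‖ = R := by
  have hR : 0 ≤ R := (norm_nonneg w).trans hw
  have hdisc : 0 ≤ R ^ 2 - ‖w‖ ^ 2 + ⟪u, w⟫ ^ 2 :=
    add_nonneg (sub_nonneg.2 (by gcongr)) (sq_nonneg _)
  rw [← sq_eq_sq₀ (norm_nonneg _) hR, norm_smul_sub_sq hu, exitRadius, add_sub_cancel_left,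
    Real.sq_sqrt hdisc]
  ring

theorem abs_exitRadius_sub_le_norm (hu : ‖u‖ = 1) (hw : ‖w‖ ≤ R) :
    |exitRadius R w u - R| ≤ ‖w‖ := by
  have h := abs_norm_sub_norm_le (exitRadius R w u • u) (exitRadius R w u • u - w)
  rwa [norm_exitRadius_smul_sub hu hw, sub_sub_cancel, norm_smul, hu, mul_one,
    Real.norm_of_nonneg (exitRadius_nonneg hw u)] at h

theorem smul_mem_closedBall_iff_le_exitRadius (hu : ‖u‖ = 1) (hw : ‖w‖ ≤ R) (hr : 0 ≤ r) :
    r • u ∈ Metric.closedBall w R ↔ r ≤ exitRadius R w u := by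
  have hR : 0 ≤ R := (norm_nonneg w).trans hw
  have hle := abs_inner_le_exitRadius_sub_inner hw u
  have hroot : R ^ 2 = (exitRadius R w u - ⟪u, w⟫) ^ 2 + (‖w‖ ^ 2 - ⟪u, w⟫ ^ 2) := by
    rw [← norm_smul_sub_sq hu, norm_exitRadius_smul_sub hu hw]
  rw [mem_closedBall_iff_norm, ← sq_le_sq₀ (norm_nonneg _) hR, norm_smul_sub_sq hu, hroot,
    add_le_add_iff_right, sq_le_sq, abs_of_nonneg ((abs_nonneg _).trans hle), abs_le]
  exact ⟨fun h ↦ by linarith [h.2], fun h ↦ ⟨by linarith [le_abs_self ⟪u, w⟫], by linarith⟩⟩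

theorem hasFDerivAt_exitRadius_zero (hR : 0 < R) (u : E) :
    HasFDerivAt (fun w ↦ exitRadius R w u) (innerSL ℝ u) 0 := by
  have hinner : HasFDerivAt (fun w : E ↦ ⟪u, w⟫) (innerSL ℝ u) 0 := (innerSL ℝ u).hasFDerivAt
  have hdisc : HasFDerivAt (fun w : E ↦ R ^ 2 - ‖w‖ ^ 2 + ⟪u, w⟫ ^ 2) (0 : E →L[ℝ] ℝ) 0 :=
    (((hasStrictFDerivAt_norm_sq (0 : E)).hasFDerivAt.const_sub (R ^ 2)).add
      (hinner.pow 2)).congr_fderiv (by ext; simp)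
  exact (hinner.add (hdisc.sqrt (by simpa using hR.ne'))).congr_fderiv (by simp)

theorem exists_forall_norm_integral_exitRadius_sub_le [FiniteDimensional ℝ E]
    {g : Metric.sphere (0 : E) 1 → ℝ → ℝ} (hg : Continuous g.uncurry) (hR : 0 ≤ R) :
    ∃ C, ∀ u, ∀ w ∈ Metric.closedBall (0 : E) R,
      ‖(∫ r in (0 : ℝ)..exitRadius R w u, g u r) - ∫ r in (0 : ℝ)..R, g u r‖ ≤ C * ‖w‖ := by
  obtain ⟨C, hC⟩ := (isCompact_univ.prod isCompact_Icc).exists_bound_of_continuousOn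
    (f := g.uncurry) (s := Set.univ ×ˢ Set.Icc 0 (2 * R)) hg.continuousOn
  refine ⟨C, fun u w hw ↦ ?_⟩
  rw [mem_closedBall_zero_iff] at hw
  have hgu : Continuous (g u) := hg.comp (.prodMk_right u)
  have hsub : |exitRadius R w u - R| ≤ ‖w‖ :=
    abs_exitRadius_sub_le_norm (norm_eq_of_mem_sphere u) hw
  have hC_nonneg : 0 ≤ C := (norm_nonneg _).trans (hC (u, 0) (by simp [hR]))
  rw [intervalIntegral.integral_interval_sub_left (hgu.intervalIntegrable _ _)
    (hgu.intervalIntegrable _ _)]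
  refine (intervalIntegral.norm_integral_le_of_norm_le_const fun r hr ↦
    hC (u, r) ⟨trivial, ?_⟩).trans (by gcongr)
  refine Set.uIcc_subset_Icc ⟨hR, by linarith⟩ ⟨exitRadius_nonneg hw _, ?_⟩
    (Set.uIoc_subset_uIcc hr)
  linarith [(abs_le.1 hsub).2]

theorem hasFDerivAt_integral_integral_exitRadius [FiniteDimensional ℝ E] [MeasurableSpace E]
    [BorelSpace E] (σ : Measure (Metric.sphere (0 : E) 1)) [IsFiniteMeasure σ]
    {g : Metric.sphere (0 : E) 1 → ℝ → ℝ} (hg : Continuous g.uncurry) (hR : 0 < R) :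
    HasFDerivAt (fun w : E ↦ ∫ u, (∫ r in (0 : ℝ)..exitRadius R w u, g u r) ∂σ)
      (∫ u, g u R • innerSL ℝ (u : E) ∂σ) 0 := by
  have hcont (w : E) :
      Continuous fun u : Metric.sphere (0 : E) 1 ↦ ∫ r in (0 : ℝ)..exitRadius R w u, g u r :=
    intervalIntegral.continuous_parametric_intervalIntegral_of_continuous hg (by fun_prop)
  have hgR : Continuous fun u ↦ g u R := hg.comp (.prodMk_left R)
  obtain ⟨C, hC⟩ := exists_forall_norm_integral_exitRadius_sub_le hg hR.le
  refine (hasFDerivAt_integral_of_dominated_loc_of_lip' (bound := fun _ ↦ C)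
    (Metric.closedBall_mem_nhds 0 hR) (fun w _ ↦ (hcont w).aestronglyMeasurable)
    ((hcont 0).integrable_of_hasCompactSupport (.of_compactSpace _))
    (Continuous.aestronglyMeasurable (by fun_prop)) (.of_forall fun u w hw ↦ ?_)
    (integrable_const C) (.of_forall fun u ↦ ?_)).2
  · simpa only [exitRadius_zero hR.le, sub_zero] using hC u w hw
  · have hgu : Continuous (g u) := hg.comp (.prodMk_right u)
    have hprim :
        HasDerivAt (fun ρ ↦ ∫ r in (0 : ℝ)..ρ, g u r) (g u R) (exitRadius R 0 (u : E)) := by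
      rw [exitRadius_zero hR.le]
      exact (hgu.integral_hasStrictDerivAt 0 R).hasDerivAt
    exact hprim.comp_hasFDerivAt 0 (hasFDerivAt_exitRadius_zero hR (u : E))

end ExitRadius

section Polar

open Module (finrank)

variable {E F : Type*} [NormedAddCommGroup E] [NormedSpace ℝ E] [FiniteDimensional ℝ E]
  [Nontrivial E] [MeasurableSpace E] [BorelSpace E] [NormedAddCommGroup F] [NormedSpace ℝ F]
  (μ : Measure E) [μ.IsAddHaarMeasure]

theorem integral_volumeIoiPow (n : ℕ) (g : ℝ → F) :
    ∫ r, g r ∂Measure.volumeIoiPow n = ∫ r in Set.Ioi (0 : ℝ), r ^ n • g r := by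
  simp only [Measure.volumeIoiPow, ENNReal.ofReal]
  rw [integral_withDensity_eq_integral_smul (by fun_prop),
    integral_subtype_comap measurableSet_Ioi fun r ↦ (r ^ n).toNNReal • g r]
  refine setIntegral_congr_fun measurableSet_Ioi fun r hr ↦ ?_
  simp only [NNReal.smul_def, Real.coe_toNNReal _ (pow_nonneg (le_of_lt hr) n)]

theorem integral_eq_integral_toSphere_integral_Ioi {g : E → F} (hg : Integrable g μ) :
    ∫ y, g y ∂μ = ∫ u : Metric.sphere (0 : E) 1,
      (∫ r in Set.Ioi (0 : ℝ), r ^ (finrank ℝ E - 1) • g (r • (u : E))) ∂μ.toSphere := by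
  have hpolar := μ.measurePreserving_homeomorphUnitSphereProd
  have hemb := (homeomorphUnitSphereProd E).measurableEmbedding
  let k : Metric.sphere (0 : E) 1 × Set.Ioi (0 : ℝ) → F := fun p ↦ g ((p.2 : ℝ) • (p.1 : E))
  have hk (y : ({0}ᶜ : Set E)) : k (homeomorphUnitSphereProd E y) = g y := by
    have : ‖(y : E)‖ ≠ 0 := norm_ne_zero_iff.2 y.2
    simp [k, smul_smul, this]
  have hk_int : Integrable k (μ.toSphere.prod (.volumeIoiPow (finrank ℝ E - 1))) := by
    rw [← hpolar.integrable_comp_emb hemb, show k ∘ _ = g ∘ Subtype.val from funext hk,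
      ← integrableOn_iff_comap_subtypeVal (measurableSet_singleton _).compl]
    exact hg.integrableOn
  calc ∫ y, g y ∂μ = ∫ y : ({0}ᶜ : Set E), g y ∂μ.comap (↑) := by
        rw [integral_subtype_comap (measurableSet_singleton _).compl g, restrict_compl_singleton]
    _ = ∫ p, k p ∂μ.toSphere.prod (.volumeIoiPow (finrank ℝ E - 1)) := by
        simp_rw [← hpolar.integral_comp hemb, hk]
    _ = ∫ u, (∫ r, k (u, r) ∂.volumeIoiPow (finrank ℝ E - 1)) ∂μ.toSphere := integral_prod k hk_int
    _ = _ := by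
      congr! 2 with u
      exact integral_volumeIoiPow _ fun r ↦ g (r • (u : E))

end Polar

section BallIntegral

open Module (finrank)

variable {E : Type*} [NormedAddCommGroup E] [InnerProductSpace ℝ E] [FiniteDimensional ℝ E]
  [Nontrivial E] [MeasurableSpace E] [BorelSpace E] {f : E → ℝ} {R : ℝ}

theorem setIntegral_closedBall_eq_integral_toSphere {w : E} (hw : ‖w‖ ≤ R)
    (hf : IntegrableOn f (Metric.closedBall w R)) :
    ∫ y in Metric.closedBall w R, f y = ∫ u : Metric.sphere (0 : E) 1,
      (∫ r in (0 : ℝ)..exitRadius R w u, r ^ (finrank ℝ E - 1) * f (r • (u : E)))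
        ∂(volume : Measure E).toSphere := by
  rw [← integral_indicator Metric.isClosed_closedBall.measurableSet,
    integral_eq_integral_toSphere_integral_Ioi _
      (hf.integrable_indicator Metric.isClosed_closedBall.measurableSet)]
  congr! 2 with u
  rw [intervalIntegral.integral_of_le (exitRadius_nonneg hw _), ← Set.Ioi_inter_Iic,
    ← setIntegral_indicator measurableSet_Iic]
  refine setIntegral_congr_fun measurableSet_Ioi fun r hr ↦ ?_
  have hmem := smul_mem_closedBall_iff_le_exitRadius (norm_eq_of_mem_sphere u) hw (le_of_lt hr)
  by_cases h : r ≤ exitRadius R w u <;> simp [Set.indicator, hmem, h]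

theorem hasGradientAt_setIntegral_closedBall_zero (hf : Continuous f) (hR : 0 < R) :
    HasGradientAt (fun w ↦ ∫ y in Metric.closedBall w R, f y)
      (R ^ (finrank ℝ E - 1) • ∫ u : Metric.sphere (0 : E) 1, f (R • (u : E)) • (u : E)
        ∂(volume : Measure E).toSphere) 0 := by
  have hderiv := hasFDerivAt_integral_integral_exitRadius (volume : Measure E).toSphere
    (g := fun u r ↦ r ^ (finrank ℝ E - 1) * f (r • (u : E))) (by fun_prop) hR
  have hint : Integrable (fun u : Metric.sphere (0 : E) 1 ↦ f (R • (u : E)) • (u : E))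
      (volume : Measure E).toSphere :=
    Continuous.integrable_of_hasCompactSupport (by fun_prop) (.of_compactSpace _)
  refine (hderiv.congr_of_eventuallyEq ?_).congr_fderiv ?_
  · filter_upwards [Metric.closedBall_mem_nhds 0 hR] with w hw
    exact setIntegral_closedBall_eq_integral_toSphere (mem_closedBall_zero_iff.1 hw)
      (hf.continuousOn.integrableOn_compact (isCompact_closedBall w R))
  · rw [map_smul]
    refine Eq.trans ?_ (congrArg _ ((innerSL ℝ).integral_comp_comm hint))
    simp only [map_smul, mul_smul, integral_smul]

theorem hasGradientAt_setIntegral_closedBall (hf : Continuous f) (hR : 0 < R) (x : E) :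
    HasGradientAt (fun x ↦ ∫ v in Metric.closedBall 0 R, f (x + v))
      (R ^ (finrank ℝ E - 1) • ∫ u : Metric.sphere (0 : E) 1, f (x + R • (u : E)) • (u : E)
        ∂(volume : Measure E).toSphere) x := by
  have htranslate (z : E) : ∫ v in Metric.closedBall 0 R, f (z + v) =
      ∫ y in Metric.closedBall (z + -x) R, f (x + y) := by
    have h := (measurePreserving_add_left volume (z + -x)).setIntegral_preimage_emb
      (measurableEmbedding_addLeft _) (fun y ↦ f (x + y)) (Metric.closedBall (z + -x) R)
    simpa [← add_assoc] using h
  have hzero := hasGradientAt_setIntegral_closedBall_zero (f := fun y ↦ f (x + y)) (by fun_prop) hR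
  simp_rw [htranslate]
  rw [hasGradientAt_iff_hasFDerivAt] at hzero ⊢
  exact (hasFDerivAt_comp_add_right (-x)).2 (by rwa [add_neg_cancel])

end BallIntegral

section IsometryInvariant

/-- A measure is isometry invariant if every linear isometry preserves it. The uniform distribution
on a centred sphere is the isometry invariant probability measure carried by that sphere. -/
def IsIsometryInvariant {E : Type*} [NormedAddCommGroup E] [NormedSpace ℝ E] [MeasurableSpace E]
    (μ : Measure E) : Prop :=
  ∀ T : E ≃ₗᵢ[ℝ] E, μ.map T = μ

variable {E : Type*} [NormedAddCommGroup E] [MeasurableSpace E] [BorelSpace E] {μ ν : Measure E}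

theorem IsIsometryInvariant.integral_comp [NormedSpace ℝ E] {F : Type*} [NormedAddCommGroup F]
    [NormedSpace ℝ F] (hμ : IsIsometryInvariant μ) (T : E ≃ₗᵢ[ℝ] E) (g : E → F) :
    ∫ x, g (T x) ∂μ = ∫ x, g x ∂μ := by
  conv_rhs => rw [← hμ T]
  exact (T.toHomeomorph.measurableEmbedding.integral_map g).symm

variable [InnerProductSpace ℝ E]

theorem IsIsometryInvariant.charFun_eq_of_norm_eq (hμ : IsIsometryInvariant μ) {s t : E}
    (h : ‖s‖ = ‖t‖) : charFun μ s = charFun μ t := by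
  let T : E ≃ₗᵢ[ℝ] E := (ℝ ∙ (s - t))ᗮ.reflection
  have hT (x : E) : ⟪T x, t⟫ = ⟪x, s⟫ := by
    rw [← T.inner_map_map x s, show T s = t from Submodule.reflection_sub h]
  rw [charFun_apply, charFun_apply,
    ← hμ.integral_comp T fun x ↦ Complex.exp (⟪x, t⟫ * Complex.I)]
  simp only [hT]

theorem integral_charFun_smul_comm [SecondCountableTopology E] [IsFiniteMeasure μ]
    [IsFiniteMeasure ν] (s : ℝ) :
    ∫ u, charFun ν (s • u) ∂μ = ∫ v, charFun μ (s • v) ∂ν := by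
  have hint : Integrable (fun p : E × E ↦ Complex.exp (⟪p.2, s • p.1⟫ * Complex.I))
      (μ.prod ν) :=
    .of_bound (Continuous.aestronglyMeasurable (by fun_prop)) 1
      (.of_forall fun p ↦ (Complex.norm_exp_ofReal_mul_I _).le)
  simp_rw [charFun_apply]
  rw [integral_integral_swap hint]
  congr! 4 with v u
  rw [real_inner_smul_right, real_inner_smul_right, real_inner_comm]

theorem IsIsometryInvariant.measure_univ_smul_eq [FiniteDimensional ℝ E] [IsFiniteMeasure μ]
    [IsFiniteMeasure ν] (hμ : IsIsometryInvariant μ) (hν : IsIsometryInvariant ν) {R : ℝ}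
    (hR : 0 < R) (hμR : ∀ᵐ u ∂μ, ‖u‖ = R) (hνR : ∀ᵐ v ∂ν, ‖v‖ = R) :
    μ Set.univ • ν = ν Set.univ • μ := by
  have := ν.smul_finite (measure_ne_top μ Set.univ)
  have := μ.smul_finite (measure_ne_top ν Set.univ)
  refine Measure.ext_of_charFun (funext fun t ↦ ?_)
  have hnorm {u : E} (hu : ‖u‖ = R) : ‖(‖t‖ / R) • u‖ = ‖t‖ := by
    rw [norm_smul, hu, norm_div, norm_norm, Real.norm_of_nonneg hR.le, div_mul_cancel₀ _ hR.ne']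
  have hswap := integral_charFun_smul_comm (μ := μ) (ν := ν) (‖t‖ / R)
  rw [integral_congr_ae (hμR.mono fun u hu ↦ hν.charFun_eq_of_norm_eq (hnorm hu)),
    integral_congr_ae (hνR.mono fun v hv ↦ hμ.charFun_eq_of_norm_eq (hnorm hv)),
    integral_const, integral_const] at hswap
  simpa only [charFun_apply, integral_smul_measure, Measure.real] using hswap

end IsometryInvariant

section ToSphere

open Module (finrank)

open scoped Pointwise

variable {E : Type*} [NormedAddCommGroup E] [InnerProductSpace ℝ E] [FiniteDimensional ℝ E]
  [MeasurableSpace E] [BorelSpace E] {μ : Measure E} {R : ℝ}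

theorem isIsometryInvariant_map_smul_toSphere (R : ℝ) :
    IsIsometryInvariant
      ((volume : Measure E).toSphere.map fun u : Metric.sphere (0 : E) 1 ↦ R • (u : E)) := by
  intro T
  have hsmul : Measurable fun u : Metric.sphere (0 : E) 1 ↦ R • (u : E) := by fun_prop
  have hT : Measurable T := T.continuous.measurable
  ext s hs
  rw [Measure.map_apply hT hs, Measure.map_apply hsmul (hT hs), Measure.map_apply hsmul hs,
    Measure.toSphere_apply' _ (hsmul (hT hs)), Measure.toSphere_apply' _ (hsmul hs)]
  congr 1
  rw [← T.measurePreserving.measure_preimage_emb T.toHomeomorph.measurableEmbedding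
    (Set.Ioo (0 : ℝ) 1 • (Subtype.val '' ((fun u : Metric.sphere (0 : E) 1 ↦ R • (u : E)) ⁻¹' s)))]
  congr 1
  ext y
  simp only [Set.mem_smul, Set.mem_preimage, Set.mem_image, Subtype.exists]
  constructor
  · rintro ⟨r, hr, _, ⟨u, hu, hus, rfl⟩, rfl⟩
    exact ⟨r, hr, T u, ⟨T u, by simpa using hu, by simpa using hus, rfl⟩, by simp⟩
  · rintro ⟨r, hr, _, ⟨u, hu, hus, rfl⟩, hy⟩
    exact ⟨r, hr, T.symm u, ⟨T.symm u, by simpa using hu, by simpa using hus, rfl⟩,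
      T.injective (by simpa using hy)⟩

theorem map_smul_toSphere_eq_smul [IsProbabilityMeasure μ] (hμ : IsIsometryInvariant μ)
    (hR : 0 < R) (hμR : ∀ᵐ u ∂μ, ‖u‖ = R) :
    (volume : Measure E).toSphere.map (fun u : Metric.sphere (0 : E) 1 ↦ R • (u : E)) =
      (finrank ℝ E * volume (Metric.ball (0 : E) 1)) • μ := by
  have hsmul : Measurable fun u : Metric.sphere (0 : E) 1 ↦ R • (u : E) := by fun_prop
  have hnorm : ∀ᵐ v ∂(volume : Measure E).toSphere.map
      (fun u : Metric.sphere (0 : E) 1 ↦ R • (u : E)), ‖v‖ = R := by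
    rw [ae_map_iff hsmul.aemeasurable (measurableSet_eq_fun (by fun_prop) (by fun_prop))]
    exact .of_forall fun u ↦ by simp [norm_smul, abs_of_pos hR]
  have h := hμ.measure_univ_smul_eq (isIsometryInvariant_map_smul_toSphere R) hR hμR hnorm
  rwa [measure_univ, one_smul, Measure.map_apply hsmul .univ, Set.preimage_univ,
    Measure.toSphere_apply_univ] at h

end ToSphere

section AverageGradient

open Module (finrank)

variable {E : Type*} [NormedAddCommGroup E] [InnerProductSpace ℝ E] [FiniteDimensional ℝ E]
  [MeasurableSpace E] [BorelSpace E] {f : E → ℝ} {μ : Measure E} {R : ℝ}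

theorem pow_smul_integral_toSphere_smul_eq [Nontrivial E] [IsProbabilityMeasure μ]
    (hf : Continuous f) (hR : 0 < R) (hμ : IsIsometryInvariant μ) (hμR : ∀ᵐ u ∂μ, ‖u‖ = R) :
    R ^ (finrank ℝ E - 1) • ∫ u : Metric.sphere (0 : E) 1, f (R • (u : E)) • (u : E)
        ∂(volume : Measure E).toSphere =
      (volume.real (Metric.closedBall (0 : E) R) * (finrank ℝ E / R ^ 2)) •
        ∫ u, f u • u ∂μ := by
  have hpush : R • ∫ u : Metric.sphere (0 : E) 1, f (R • (u : E)) • (u : E)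
      ∂(volume : Measure E).toSphere =
        (finrank ℝ E * volume.real (Metric.ball (0 : E) 1)) • ∫ u, f u • u ∂μ := by
    have h := integral_smul_measure (μ := μ) (fun u ↦ f u • u)
      (finrank ℝ E * volume (Metric.ball (0 : E) 1))
    rw [← map_smul_toSphere_eq_smul hμ hR hμR, integral_map (by fun_prop)
      (Continuous.aestronglyMeasurable (by fun_prop)), ENNReal.toReal_mul] at h
    rw [← integral_smul]
    simpa only [smul_comm R, ENNReal.toReal_natCast, Measure.real] using h
  have hvol : volume.real (Metric.closedBall (0 : E) R) =
      R ^ (finrank ℝ E - 1) * R * volume.real (Metric.ball (0 : E) 1) := by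
    rw [Measure.real, Measure.addHaar_closedBall _ _ hR.le, ENNReal.toReal_mul,
      ENNReal.toReal_ofReal (by positivity), pow_sub_one_mul Module.finrank_pos.ne', Measure.real]
  rw [← smul_right_injective E hR.ne' |>.eq_iff, smul_comm, hpush, hvol, smul_smul, smul_smul]
  congr 1
  field_simp

theorem hasGradientAt_setAverage_closedBall [Nontrivial E] [IsProbabilityMeasure μ]
    (hf : Continuous f) (hR : 0 < R) (hμ : IsIsometryInvariant μ) (hμR : ∀ᵐ u ∂μ, ‖u‖ = R) (x : E) :
    HasGradientAt (fun x ↦ ⨍ v in Metric.closedBall 0 R, f (x + v))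
      ((finrank ℝ E / R ^ 2) • ∫ u, f (x + u) • u ∂μ) x := by
  have hvol : volume.real (Metric.closedBall (0 : E) R) ≠ 0 :=
    (ENNReal.toReal_pos (Metric.measure_closedBall_pos _ _ hR).ne' measure_closedBall_lt_top.ne).ne'
  have h := hasGradientAt_setIntegral_closedBall hf hR x
  rw [pow_smul_integral_toSphere_smul_eq (f := fun y ↦ f (x + y)) (by fun_prop) hR hμ hμR,
    mul_smul, hasGradientAt_iff_hasFDerivAt, map_smul] at h
  simp_rw [setAverage_eq]
  rw [hasGradientAt_iff_hasFDerivAt]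
  simpa only [inv_smul_smul₀ hvol] using
    h.fun_const_smul (volume.real (Metric.closedBall (0 : E) R))⁻¹

end AverageGradient

section TwoPoint

variable {E : Type*} [NormedAddCommGroup E] [MeasurableSpace E] [BorelSpace E] {μ : Measure E}
  [IsFiniteMeasureOnCompacts μ] {R : ℝ}

theorem integrable_of_continuous_of_ae_norm_eq [ProperSpace E] {F : Type*} [NormedAddCommGroup F]
    {g : E → F} (hg : Continuous g) (hμR : ∀ᵐ u ∂μ, ‖u‖ = R) : Integrable g μ := by
  rw [← Measure.restrict_eq_self_of_ae_mem (μ := μ) (s := Metric.sphere 0 R)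
    (by simpa using hμR)]
  exact hg.continuousOn.integrableOn_compact (isCompact_sphere 0 R)

theorem IsIsometryInvariant.integral_twoPoint_smul [NormedSpace ℝ E] [FiniteDimensional ℝ E]
    (hμ : IsIsometryInvariant μ) {f : E → ℝ} (hf : Continuous f) (hμR : ∀ᵐ u ∂μ, ‖u‖ = R) (x : E)
    (lam : ℝ) :
    ∫ u, ((f (x + lam • u) - f (x - lam • u)) / (2 * lam)) • u ∂μ =
      lam⁻¹ • ∫ u, f (x + lam • u) • u ∂μ := by
  have := FiniteDimensional.proper ℝ E
  have hneg : ∫ u, f (x - lam • u) • u ∂μ = -∫ u, f (x + lam • u) • u ∂μ := by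
    rw [← hμ.integral_comp (LinearIsometryEquiv.neg ℝ), ← integral_neg]
    simp
  have hsub : ∫ u, (f (x + lam • u) - f (x - lam • u)) • u ∂μ =
      (2 : ℝ) • ∫ u, f (x + lam • u) • u ∂μ := by
    simp_rw [sub_smul]
    rw [integral_sub (integrable_of_continuous_of_ae_norm_eq (by fun_prop) hμR)
      (integrable_of_continuous_of_ae_norm_eq (by fun_prop) hμR), hneg, sub_neg_eq_add, two_smul]
  simp_rw [div_eq_inv_mul, mul_smul, integral_smul, hsub, smul_smul]
  congr 1
  ring

end TwoPoint

theorem stmt0_general {E : Type*} [NormedAddCommGroup E] [InnerProductSpace ℝ E]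
    [FiniteDimensional ℝ E] [MeasurableSpace E] [BorelSpace E] {f : E → ℝ} (hf : Continuous f)
    {lam : ℝ} (hlam : lam ≠ 0) {μ : Measure E} [IsProbabilityMeasure μ]
    (hsupp : μ (Metric.sphere 0 √(Module.finrank ℝ E)) = 1) (hμ : IsIsometryInvariant μ) (x : E) :
    HasGradientAt (fun x ↦ ⨍ v in Metric.closedBall 0 √(Module.finrank ℝ E), f (x + lam • v))
      (∫ u, ((f (x + lam • u) - f (x - lam • u)) / (2 * lam)) • u ∂μ) x := by
  rcases subsingleton_or_nontrivial E with _ | _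
  · rw [hasGradientAt_iff_hasFDerivAt, Subsingleton.elim (∫ u, _ ∂μ) 0, map_zero]
    exact hasFDerivAt_of_subsingleton _ x
  have hdim : (0 : ℝ) < Module.finrank ℝ E := mod_cast Module.finrank_pos
  have hnorm : ∀ᵐ u ∂μ, ‖u‖ = √(Module.finrank ℝ E) := by
    filter_upwards [(mem_ae_iff_prob_eq_one Metric.isClosed_sphere.measurableSet).2 hsupp] with u hu
    exact mem_sphere_zero_iff_norm.1 hu
  have hscaled := hasGradientAt_setAverage_closedBall (f := fun y ↦ f (lam • y)) (by fun_prop)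
    (Real.sqrt_pos.2 hdim) hμ hnorm (lam⁻¹ • x)
  rw [Real.sq_sqrt hdim.le, div_self hdim.ne', one_smul, hasGradientAt_iff_hasFDerivAt] at hscaled
  have hcomp := hscaled.comp x ((hasFDerivAt_id x).const_smul lam⁻¹)
  simp only [smul_add, smul_inv_smul₀ hlam, Function.comp_def] at hcomp
  rw [hμ.integral_twoPoint_smul hf hnorm, hasGradientAt_iff_hasFDerivAt]
  refine hcomp.congr_fderiv ?_
  ext; simp

/-- For `f : ℝ^d → ℝ` (L-smooth), `λ > 0`, `u` uniform on the sphere of radius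
`√d` (characterized as the rotation-invariant probability measure on that sphere), the
two-point estimator `g(x) = ((f(x+λu) - f(x-λu))/(2λ)) • u` satisfies:
`f_λ` is differentiable and `E_u[g(x)] = ∇ f_λ(x)`, where
`f_λ(x) = E_v[f(x + λ v)]` with `v` uniform on the ball of radius `√d`. -/
theorem stmt0 {d : ℕ} (f : EuclideanSpace ℝ (Fin d) → ℝ) (L lam : ℝ)
    (hlam : 0 < lam)
    (hdiff : ∀ x, DifferentiableAt ℝ f x)
    (hsmooth : ∀ x y, ‖gradient f x - gradient f y‖ ≤ L * ‖x - y‖)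
    (μ : Measure (EuclideanSpace ℝ (Fin d))) [IsProbabilityMeasure μ]
    (hsupp : μ (Metric.sphere (0 : EuclideanSpace ℝ (Fin d)) (Real.sqrt d)) = 1)
    (hinv : ∀ T : EuclideanSpace ℝ (Fin d) ≃ₗᵢ[ℝ] EuclideanSpace ℝ (Fin d),
      Measure.map (⇑T) μ = μ)
    (flam : EuclideanSpace ℝ (Fin d) → ℝ)
    (hflam : ∀ x, flam x = ∫ v, f (x + lam • v) ∂(ballUniform d))
    (x : EuclideanSpace ℝ (Fin d)) :
    DifferentiableAt ℝ flam x ∧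
      (∫ u, ((f (x + lam • u) - f (x - lam • u)) / (2 * lam)) • u ∂μ)
        = gradient flam x := by
  have hf : Continuous f := continuous_iff_continuousAt.2 fun y ↦ (hdiff y).continuousAt
  have hgrad := stmt0_general hf hlam.ne' (by rwa [finrank_euclideanSpace_fin]) hinv x
  simp only [finrank_euclideanSpace_fin, setAverage_eq', ← ballUniform.eq_1, ← hflam] at hgrad
  exact ⟨hgrad.differentiableAt, hgrad.gradient.symm⟩
end

section
/- Let u be uniformly distributed on the Euclidean sphere of radius √d in ℝ^d and let a ∈ ℝ^d be a fixed nonzero vector. Then E[u] = 0 and for all C > 0, P(|⟨u, a⟩| ≥ C) ≤ 2√(2π)·exp(−C²/(8‖a‖²)). -/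
open MeasureTheory
open scoped RealInnerProductSpace

/-!
By rotation invariance, `⟪u, a⟫` has the same law as `⟪u, v⟫` for every `v` of norm `‖a‖`, in
particular for the `2 ^ d` vertices `v = (‖a‖ / √d) ∑ i, ± e i` of a cube. For fixed `u` the average
of `exp (t ⟪u, v⟫)` over these vertices is `∏ i, cosh (t (‖a‖ / √d) u i)`, which is at most
`exp (t² ‖a‖² ‖u‖² / (2 d))` since `cosh x ≤ exp (x² / 2)`. As `‖u‖² = d`, this makes `⟪u, a⟫`
sub-Gaussian with variance proxy `‖a‖²`, and the Chernoff bound gives the tail estimate.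
-/

open ProbabilityTheory Module
open scoped NNReal

section Signs

variable {ι : Type*} [Fintype ι] [DecidableEq ι]

lemma sum_signs_exp_sum_mul (x : ι → ℝ) :
    ∑ ε : ι → ℤˣ, Real.exp (∑ i, (ε i : ℤ) * x i) = ∏ i, (2 * Real.cosh (x i)) := by
  have two_mul_cosh (i : ι) : 2 * Real.cosh (x i) = ∑ s : ℤˣ, Real.exp ((s : ℤ) * x i) := by
    simp [UnitsInt.univ, Real.cosh_eq, mul_div_cancel₀]
  simp only [Real.exp_sum, two_mul_cosh, Fintype.prod_sum]

lemma sum_signs_exp_sum_mul_le (x : ι → ℝ) :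
    ∑ ε : ι → ℤˣ, Real.exp (∑ i, (ε i : ℤ) * x i) ≤
      2 ^ Fintype.card ι * Real.exp ((∑ i, x i ^ 2) / 2) :=
  calc ∑ ε : ι → ℤˣ, Real.exp (∑ i, (ε i : ℤ) * x i)
      = ∏ i, (2 * Real.cosh (x i)) := sum_signs_exp_sum_mul x
    _ ≤ ∏ i, (2 * Real.exp (x i ^ 2 / 2)) := by
        gcongr with i
        exact Real.cosh_le_exp_half_sq (x i)
    _ = 2 ^ Fintype.card ι * Real.exp ((∑ i, x i ^ 2) / 2) := by
        simp [Finset.prod_mul_distrib, Finset.sum_div, Real.exp_sum]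

end Signs

section InnerProductSpace

variable {E : Type*} [NormedAddCommGroup E] [InnerProductSpace ℝ E]

section CubeVertex

variable {ι : Type*} [Fintype ι] {e : ι → E}

/-- The vertex with sign pattern `ε` of the cube of side `2 * s` centred at the origin whose edges
are parallel to the orthonormal vectors `e i`. Rotation invariance is exploited by averaging over
these vertices, which all have the same norm. -/
def cubeVertex (e : ι → E) (s : ℝ) (ε : ι → ℤˣ) : E :=
  ∑ i, (s * (ε i : ℤ)) • e i

lemma inner_cubeVertex (e : ι → E) (s : ℝ) (ε : ι → ℤˣ) (u : E) :
    ⟪u, cubeVertex e s ε⟫ = ∑ i, (ε i : ℤ) * (s * ⟪u, e i⟫) := by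
  simp only [cubeVertex, inner_sum, inner_smul_right]
  exact Finset.sum_congr rfl fun i _ ↦ by ring

lemma norm_cubeVertex_sq (he : Orthonormal ℝ e) (s : ℝ) (ε : ι → ℤˣ) :
    ‖cubeVertex e s ε‖ ^ 2 = Fintype.card ι * s ^ 2 := by
  have sq_sign (i : ι) : ((ε i : ℤ) : ℝ) * (ε i : ℤ) = 1 := by
    exact_mod_cast Int.units_coe_mul_self (ε i)
  rw [← real_inner_self_eq_norm_sq, cubeVertex, he.inner_sum]
  simp [mul_mul_mul_comm, sq_sign, sq]

lemma norm_cubeVertex_norm_div_sqrt [Nonempty ι] (he : Orthonormal ℝ e) (a : E) (ε : ι → ℤˣ) :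
    ‖cubeVertex e (‖a‖ / √(Fintype.card ι)) ε‖ = ‖a‖ := by
  have hcard : (Fintype.card ι : ℝ) ≠ 0 := by exact_mod_cast Fintype.card_ne_zero
  rw [← sq_eq_sq₀ (norm_nonneg _) (norm_nonneg _), norm_cubeVertex_sq he, div_pow,
    Real.sq_sqrt (Nat.cast_nonneg _), mul_div_cancel₀ _ hcard]

lemma sum_exp_mul_inner_cubeVertex_le [DecidableEq ι] (he : Orthonormal ℝ e) (s t : ℝ) (u : E) :
    ∑ ε : ι → ℤˣ, Real.exp (t * ⟪u, cubeVertex e s ε⟫) ≤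
      2 ^ Fintype.card ι * Real.exp ((t * s * ‖u‖) ^ 2 / 2) := by
  have bessel : ∑ i, ⟪u, e i⟫ ^ 2 ≤ ‖u‖ ^ 2 := by
    simpa [real_inner_comm] using he.sum_inner_products_le (s := Finset.univ) (x := u)
  calc ∑ ε : ι → ℤˣ, Real.exp (t * ⟪u, cubeVertex e s ε⟫)
      = ∑ ε : ι → ℤˣ, Real.exp (∑ i, (ε i : ℤ) * (t * s * ⟪u, e i⟫)) := by
        simp only [inner_cubeVertex, Finset.mul_sum, mul_left_comm, mul_assoc]
    _ ≤ 2 ^ Fintype.card ι * Real.exp ((∑ i, (t * s * ⟪u, e i⟫) ^ 2) / 2) :=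
        sum_signs_exp_sum_mul_le _
    _ ≤ 2 ^ Fintype.card ι * Real.exp ((t * s * ‖u‖) ^ 2 / 2) := by
        simp only [mul_pow _ ⟪u, _⟫, mul_pow _ ‖u‖, ← Finset.mul_sum]
        gcongr

end CubeVertex

lemma measureReal_abs_ge_le_of_hasSubgaussianMGF {Ω : Type*} [MeasurableSpace Ω] {μ : Measure Ω}
    {X : Ω → ℝ} {c : ℝ≥0} (hX : HasSubgaussianMGF X c μ) {C : ℝ} (hC : 0 ≤ C) :
    μ.real {ω | C ≤ |X ω|} ≤ 2 * Real.exp (-C ^ 2 / (2 * c)) := by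
  have tails : {ω | C ≤ |X ω|} = {ω | C ≤ X ω} ∪ {ω | C ≤ (-X) ω} := by
    ext ω
    simp [le_abs]
  rw [tails, two_mul]
  exact (measureReal_union_le _ _).trans
    (add_le_add (hX.measure_ge_le hC) (hX.neg.measure_ge_le hC))

variable [MeasurableSpace E]

lemma integrable_exp_mul_inner_of_norm_le [BorelSpace E] {μ : Measure E} [IsFiniteMeasure μ]
    {r : ℝ} (hr : ∀ᵐ u ∂μ, ‖u‖ ≤ r) (a : E) (t : ℝ) :
    Integrable (fun u ↦ Real.exp (t * ⟪u, a⟫)) μ := by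
  refine integrable_exp_mul_of_mem_Icc (a := -(r * ‖a‖)) (b := r * ‖a‖) (by fun_prop) ?_
  filter_upwards [hr] with u hu
  exact abs_le.1 ((abs_real_inner_le_norm u a).trans (by gcongr))

/-- Invariance of a measure under all linear isometries. Together with being a probability measure
carried by a sphere centred at the origin, this characterises the uniform distribution on it. -/
def IsRotationInvariant (μ : Measure E) : Prop :=
  ∀ T : E ≃ₗᵢ[ℝ] E, μ.map T = μ

namespace IsRotationInvariant

variable [BorelSpace E] {μ : Measure E}

lemma integral_id_eq_zero (hμ : IsRotationInvariant μ) : ∫ u, u ∂μ = 0 := by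
  have : μ.IsNegInvariant := ⟨hμ (LinearIsometryEquiv.neg ℝ)⟩
  have symmetric : ∫ u, u ∂μ = -∫ u, u ∂μ :=
    (integral_neg_eq_self (fun u : E ↦ u) μ).symm.trans (integral_neg _)
  have : IsAddTorsionFree E := .of_isTorsionFree ℝ E
  exact self_eq_neg.1 symmetric

lemma identDistrib_inner (hμ : IsRotationInvariant μ) {x y : E} (hxy : ‖x‖ = ‖y‖) :
    IdentDistrib (fun u ↦ ⟪u, x⟫) (fun u ↦ ⟪u, y⟫) μ μ where
  aemeasurable_fst := by fun_prop
  aemeasurable_snd := by fun_prop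
  map_eq := by
    let T : E ≃ₗᵢ[ℝ] E := (ℝ ∙ (x - y))ᗮ.reflection
    have hT : T x = y := Submodule.reflection_sub hxy
    calc μ.map (fun u ↦ ⟪u, x⟫)
        = μ.map ((fun u ↦ ⟪u, y⟫) ∘ T) := by
          simp only [Function.comp_def, ← hT, LinearIsometryEquiv.inner_map_map]
      _ = μ.map (fun u ↦ ⟪u, y⟫) := by
          rw [← Measure.map_map (by fun_prop) T.continuous.measurable, hμ T]

lemma hasSubgaussianMGF_inner [IsProbabilityMeasure μ] (hμ : IsRotationInvariant μ) {r : ℝ≥0}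
    (hr : ∀ᵐ u ∂μ, ‖u‖ ≤ r) {ι : Type*} [Fintype ι] [Nonempty ι] {e : ι → E}
    (he : Orthonormal ℝ e) (a : E) :
    HasSubgaussianMGF (fun u ↦ ⟪u, a⟫) ((r * ‖a‖₊) ^ 2 / Fintype.card ι) μ where
  integrable_exp_mul := integrable_exp_mul_inner_of_norm_le hr a
  mgf_le t := by
    classical
    set s : ℝ := ‖a‖ / √(Fintype.card ι)
    have mgf_cubeVertex (ε : ι → ℤˣ) :
        ∫ u, Real.exp (t * ⟪u, cubeVertex e s ε⟫) ∂μ = mgf (fun u ↦ ⟪u, a⟫) μ t :=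
      congrFun (mgf_congr_identDistrib
        (hμ.identDistrib_inner (norm_cubeVertex_norm_div_sqrt he a ε))) t
    have exponent_eq : (t * s * r) ^ 2 = (r * ‖a‖) ^ 2 / Fintype.card ι * t ^ 2 := by
      rw [mul_pow, mul_pow, div_pow, Real.sq_sqrt (Nat.cast_nonneg _)]
      ring
    refine le_of_mul_le_mul_left ?_ (by positivity : (0 : ℝ) < 2 ^ Fintype.card ι)
    calc 2 ^ Fintype.card ι * mgf (fun u ↦ ⟪u, a⟫) μ t
        = ∑ ε : ι → ℤˣ, ∫ u, Real.exp (t * ⟪u, cubeVertex e s ε⟫) ∂μ := by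
          simp [mgf_cubeVertex]
      _ = ∫ u, ∑ ε : ι → ℤˣ, Real.exp (t * ⟪u, cubeVertex e s ε⟫) ∂μ :=
          (integral_finsetSum _ fun ε _ ↦ integrable_exp_mul_inner_of_norm_le hr _ t).symm
      _ ≤ ∫ _, 2 ^ Fintype.card ι * Real.exp ((t * s * r) ^ 2 / 2) ∂μ := by
          refine integral_mono_ae
            (integrable_finsetSum _ fun ε _ ↦ integrable_exp_mul_inner_of_norm_le hr _ t)
            (integrable_const _) ?_
          filter_upwards [hr] with u hu
          refine (sum_exp_mul_inner_cubeVertex_le he s t u).trans ?_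
          simp only [mul_pow _ ‖u‖, mul_pow _ (r : ℝ)]
          gcongr
      _ = _ := by
          simp [exponent_eq]

end IsRotationInvariant

lemma two_mul_exp_neg_sq_div_le (C x : ℝ) :
    2 * Real.exp (-C ^ 2 / (2 * x ^ 2)) ≤
      2 * √(2 * Real.pi) * Real.exp (-C ^ 2 / (8 * x ^ 2)) := by
  have one_le_sqrt_two_pi : 1 ≤ √(2 * Real.pi) :=
    Real.one_le_sqrt.2 (by linarith [Real.pi_gt_three])
  have exponent_le : -C ^ 2 / (2 * x ^ 2) ≤ -C ^ 2 / (8 * x ^ 2) := by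
    have : 0 ≤ C ^ 2 / x ^ 2 := by positivity
    rw [mul_comm 2, mul_comm 8, ← div_div, ← div_div, neg_div]
    linarith
  calc 2 * Real.exp (-C ^ 2 / (2 * x ^ 2))
      = 2 * 1 * Real.exp (-C ^ 2 / (2 * x ^ 2)) := by rw [mul_one]
    _ ≤ 2 * √(2 * Real.pi) * Real.exp (-C ^ 2 / (8 * x ^ 2)) := by gcongr

theorem stmt5_general [BorelSpace E] [FiniteDimensional ℝ E] {μ : Measure E}
    [IsProbabilityMeasure μ] (hμ : IsRotationInvariant μ)
    (hball : ∀ᵐ u ∂μ, ‖u‖ ≤ √(finrank ℝ E)) {a : E} (ha : a ≠ 0) :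
    ∫ u, u ∂μ = 0 ∧ ∀ C : ℝ, 0 ≤ C →
      μ {u | C ≤ |⟪u, a⟫|} ≤ ENNReal.ofReal (2 * Real.exp (-C ^ 2 / (2 * ‖a‖ ^ 2))) := by
  refine ⟨hμ.integral_id_eq_zero, fun C hC ↦ ?_⟩
  have : Nontrivial E := nontrivial_of_ne a 0 ha
  have : NeZero (finrank ℝ E) := ⟨finrank_pos.ne'⟩
  have proxy_eq : (NNReal.sqrt (finrank ℝ E) * ‖a‖₊) ^ 2 / Fintype.card (Fin (finrank ℝ E)) =
      ‖a‖₊ ^ 2 := by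
    rw [mul_pow, NNReal.sq_sqrt, Fintype.card_fin, mul_div_cancel_left₀ _ (NeZero.ne _)]
  have subgaussian : HasSubgaussianMGF (fun u ↦ ⟪u, a⟫) (‖a‖₊ ^ 2) μ :=
    proxy_eq ▸ hμ.hasSubgaussianMGF_inner (by simpa using hball)
      (stdOrthonormalBasis ℝ E).orthonormal a
  rw [← ofReal_measureReal]
  exact ENNReal.ofReal_le_ofReal <| by
    simpa using measureReal_abs_ge_le_of_hasSubgaussianMGF subgaussian hC

end InnerProductSpace

/-- Let `u` be uniform on the Euclidean sphere of radius `√d` in `ℝ^d`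
(characterized as the rotation-invariant probability measure on that sphere) and `a ≠ 0`
a fixed vector. Then `E[u] = 0` and for all `C > 0`,
`P(|⟨u, a⟩| ≥ C) ≤ 2√(2π)·exp(−C²/(8‖a‖²))`. -/
theorem stmt5 {d : ℕ} (μ : Measure (EuclideanSpace ℝ (Fin d))) [IsProbabilityMeasure μ]
    (hsupp : μ (Metric.sphere (0 : EuclideanSpace ℝ (Fin d)) (Real.sqrt d)) = 1)
    (hinv : ∀ T : EuclideanSpace ℝ (Fin d) ≃ₗᵢ[ℝ] EuclideanSpace ℝ (Fin d),
      Measure.map (⇑T) μ = μ)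
    (a : EuclideanSpace ℝ (Fin d)) (ha : a ≠ 0) :
    (∫ u, u ∂μ = 0) ∧
    ∀ C : ℝ, 0 < C →
      μ {u | C ≤ |⟪u, a⟫|} ≤
        ENNReal.ofReal (2 * Real.sqrt (2 * Real.pi) * Real.exp (-C ^ 2 / (8 * ‖a‖ ^ 2))) := by
  have hsphere := (mem_ae_iff_prob_eq_one Metric.isClosed_sphere.measurableSet).2 hsupp
  have hball : ∀ᵐ u ∂μ, ‖u‖ ≤ √(finrank ℝ (EuclideanSpace ℝ (Fin d))) := by
    filter_upwards [hsphere] with u hu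
    rw [finrank_euclideanSpace_fin, mem_sphere_zero_iff_norm.1 hu]
  have general := stmt5_general hinv hball ha
  exact ⟨general.1, fun C hC ↦ (general.2 C hC.le).trans
    (ENNReal.ofReal_le_ofReal (two_mul_exp_neg_sq_div_le C ‖a‖))⟩
end
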